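/- Let n ≥ 2. Then there exist constants c ∈ (0, 1/2), ε₀ ∈ (0, 1) and C > 0, depending only on n, with the following property. For every ε ∈ (0, ε₀), set V = {x ∈ ℝⁿ : ‖x‖ ≤ c, ‖x − (1+ε)eₙ‖ ≥ 1, ‖x + (1+ε)eₙ‖ ≥ 1}. Suppose u : ℝⁿ → ℝ is C² on an open set containing V, Δu = 0 at every point of the interior of V, and u satisfies the Neumann conditions ⟨∇u(x), x − (1+ε)eₙ⟩ = 0 for every x ∈ V with ‖x − (1+ε)eₙ‖ = 1 and ⟨∇u(x), x + (1+ε)eₙ⟩ = 0 for every x ∈ V with ‖x + (1+ε)eₙ‖ = 1. Then for every x ∈ V, (ε + |x'|²) ‖∇u(x)‖² ≤ C · sup{ ‖∇u(y)‖² + u(y)² : y ∈ V, ‖y‖ = c }. (This is the maximum-principle form of the Bao–Li–Yin estimate |∇u|(x) ≤ C‖φ‖_{C^{1,α}(∂Ω)} (ε+|x'|²)^{−1/2} of Theorem 4.1.) -/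

import Mathlib

open scoped RealInnerProductSpace

/-!
Write `F = ε + |x'|² - xₙ²`. On the narrow region `F` is comparable with `ε + |x'|²`, it is
subharmonic and `‖∇F‖² ≤ K F`, so Bernstein's function `Φ = F ‖∇u‖² + K u²` formally satisfies
`ΔΦ ≥ 0`. As `u` is only `C²`, its gradient is replaced by difference quotients, which are
harmonic; touching `Φ` from above by `C²` functions then gives `ΔΦ ≥ 0` in the viscosity sense.
On a unit sphere with centre `p` carrying the Neumann condition, differentiating
`⟪∇u(x), x - p⟫ = 0` along the tangent vector `∇u` gives `∂_N ‖∇u‖² = -2 ‖∇u‖²` for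
`N = x - p`, while `∂_N F ≥ 2 F`; hence `∂_N Φ ≥ 0`. Adding a small multiple of a strictly
subharmonic barrier with positive normal derivative makes both inequalities strict, so a maximum
of `Φ` can only occur on `‖x‖ = c`.
-/

section Calculus

open Filter Topology

theorem deriv_deriv_nonpos_of_isLocalMax {f : ℝ → ℝ} {a : ℝ} (hf : IsLocalMax f a)
    (hc : ContinuousAt f a) : deriv (deriv f) a ≤ 0 := by
  by_contra! hpos
  have hmin : IsLocalMin f a := isLocalMin_of_deriv_deriv_pos hpos hf.deriv_eq_zero hc
  have hconst : f =ᶠ[𝓝 a] fun _ ↦ f a := by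
    filter_upwards [hf, hmin] with t h₁ h₂ using le_antisymm h₁ h₂
  simp [hconst.deriv.deriv_eq] at hpos

variable {E F : Type*} [NormedAddCommGroup E] [NormedSpace ℝ E] [NormedAddCommGroup F]
  [NormedSpace ℝ F]

theorem differentiableAt_fderiv {f : E → F} {x : E} (hf : ContDiffAt ℝ 2 f x) :
    DifferentiableAt ℝ (fderiv ℝ f) x :=
  (hf.fderiv_right (m := 1) (by norm_num)).differentiableAt one_ne_zero

theorem eventually_differentiableAt {f : E → F} {x : E} (hf : ContDiffAt ℝ 2 f x) :
    ∀ᶠ y in 𝓝 x, DifferentiableAt ℝ f y :=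
  (hf.eventually (by simp)).mono fun _ hy ↦ hy.differentiableAt two_ne_zero

theorem fderiv_fderiv_apply_nonpos_of_isLocalMax {f : E → ℝ} {x : E} (hf : ContDiffAt ℝ 2 f x)
    (hmax : IsLocalMax f x) (v : E) : fderiv ℝ (fderiv ℝ f) x v v ≤ 0 := by
  have hline (t : ℝ) : HasDerivAt (fun t : ℝ ↦ x + t • v) v t := by
    simpa using ((hasDerivAt_id t).smul_const v).const_add x
  have htends : Tendsto (fun t : ℝ ↦ x + t • v) (𝓝 0) (𝓝 x) := by
    simpa using (hline 0).continuousAt.tendsto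
  have hderiv : deriv (fun t : ℝ ↦ f (x + t • v)) =ᶠ[𝓝 0]
      fun t ↦ fderiv ℝ f (x + t • v) v := by
    filter_upwards [htends.eventually (eventually_differentiableAt hf)] with t ht
    exact (ht.hasFDerivAt.comp_hasDerivAt t (hline t)).deriv
  have hderiv₂ : HasDerivAt (fun t : ℝ ↦ fderiv ℝ f (x + t • v) v)
      (fderiv ℝ (fderiv ℝ f) x v v) 0 := by
    have h : HasFDerivAt (fun y ↦ fderiv ℝ f y v) ((fderiv ℝ (fderiv ℝ f) x).flip v)
        (x + (0 : ℝ) • v) := by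
      simpa using (differentiableAt_fderiv hf).hasFDerivAt.clm_apply (hasFDerivAt_const v x)
    exact h.comp_hasDerivAt 0 (hline 0)
  rw [← hderiv₂.deriv, ← hderiv.deriv_eq]
  refine deriv_deriv_nonpos_of_isLocalMax ?_ ?_
  · filter_upwards [htends.eventually hmax] with t ht using by simpa using ht
  · exact ContinuousAt.comp' (by simpa using hf.continuousAt) (hline 0).continuousAt

theorem not_isMaxOn_of_fderiv_pos {g : E → ℝ} {p x : E} {V : Set E}
    (hV : ∀ᶠ y in 𝓝 x, ‖x - p‖ ≤ ‖y - p‖ → y ∈ V) (hg : DifferentiableAt ℝ g x)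
    (hpos : 0 < fderiv ℝ g x (x - p)) : ¬ IsMaxOn g V x := by
  intro hmax
  refine hpos.not_ge (hmax.localize.hasFDerivWithinAt_nonpos hg.hasFDerivAt.hasFDerivWithinAt
    (mem_posTangentConeAt_of_frequently_mem (Eventually.frequently ?_)))
  have hline : Tendsto (fun t : ℝ ↦ x + t • (x - p)) (𝓝 0) (𝓝 x) :=
    Continuous.tendsto' (by fun_prop) _ _ (by simp)
  filter_upwards [(hline.mono_left nhdsWithin_le_nhds).eventually hV, self_mem_nhdsWithin]
    with t ht (htpos : 0 < t)
  refine ht ?_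
  rw [show x + t • (x - p) - p = (1 + t) • (x - p) by module, norm_smul,
    Real.norm_of_nonneg (by positivity)]
  exact le_mul_of_one_le_left (norm_nonneg _) (by linarith)

/-- The difference quotient of `f` in direction `v` with step `h`, with junk value `0` at
`h = 0`. -/
noncomputable def differenceQuotient (f : E → F) (v : E) (h : ℝ) (x : E) : F :=
  h⁻¹ • (f (x + h • v) - f x)

theorem tendsto_differenceQuotient {f : E → F} {f' : E →L[ℝ] F} {x : E}
    (hf : HasStrictFDerivAt f f' x) (v : E) :
    Tendsto (fun p : ℝ × E ↦ differenceQuotient f v p.1 p.2) (𝓝[≠] 0 ×ˢ 𝓝 x) (𝓝 (f' v)) := by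
  have htends : Tendsto (fun p : ℝ × E ↦ (p.2 + p.1 • v, p.2)) (𝓝[≠] 0 ×ˢ 𝓝 x) (𝓝 (x, x)) := by
    have : Tendsto (fun p : ℝ × E ↦ (p.2 + p.1 • v, p.2)) (𝓝 0 ×ˢ 𝓝 x) (𝓝 (x, x)) := by
      rw [← nhds_prod_eq]
      exact Continuous.tendsto' (by fun_prop) _ _ (by simp)
    exact this.mono_left (Filter.prod_mono nhdsWithin_le_nhds le_rfl)
  have hlittle : (fun p : ℝ × E ↦ f (p.2 + p.1 • v) - f p.2 - f' (p.1 • v))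
      =o[𝓝[≠] 0 ×ˢ 𝓝 x] Prod.fst := by
    have h := hf.isLittleO.comp_tendsto htends
    simp only [Function.comp_def, add_sub_cancel_left] at h
    exact h.trans_isBigO (.of_bound ‖v‖ (.of_forall fun p ↦ by rw [norm_smul, mul_comm]))
  have hlim := hlittle.tendsto_inv_smul_nhds_zero.add_const (f' v)
  rw [zero_add] at hlim
  have hne : ∀ᶠ p : ℝ × E in 𝓝[≠] 0 ×ˢ 𝓝 x, p.1 ≠ 0 :=
    eventually_mem_nhdsWithin.prod_inl _
  refine hlim.congr' (hne.mono fun p hp ↦ ?_)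
  simp only [differenceQuotient, map_smul, smul_sub, inv_smul_smul₀ hp, sub_add_cancel]

end Calculus

section Gradient

open InnerProductSpace Gradient

variable {E : Type*} [NormedAddCommGroup E] [InnerProductSpace ℝ E]

theorem hasStrictFDerivAt_norm_sub_sq (p x : E) :
    HasStrictFDerivAt (fun y ↦ ‖y - p‖ ^ 2) (2 • innerSL ℝ (x - p)) x := by
  simpa using (hasStrictFDerivAt_norm_sq (x - p)).comp x ((hasStrictFDerivAt_id x).sub_const p)

variable [CompleteSpace E]

theorem contDiffAt_gradient {f : E → ℝ} {x : E} {m n : WithTop ℕ∞}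
    (hf : ContDiffAt ℝ n f x) (hmn : m + 1 ≤ n) : ContDiffAt ℝ m (∇ f) x :=
  (toDual ℝ E).symm.contDiff.contDiffAt.comp x (hf.fderiv_right hmn)

theorem inner_fderiv_gradient {u : E → ℝ} {x : E} (hu : ContDiffAt ℝ 2 u x) (v w : E) :
    ⟪fderiv ℝ (∇ u) x v, w⟫ = fderiv ℝ (fderiv ℝ u) x v w := by
  have h : HasFDerivAt (∇ u) _ x :=
    (toDual ℝ E).symm.toContinuousLinearEquiv.hasFDerivAt.comp x
      (differentiableAt_fderiv hu).hasFDerivAt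
  rw [h.fderiv]
  exact toDual_symm_apply

theorem gradient_sq {f : E → ℝ} {x : E} (hf : DifferentiableAt ℝ f x) :
    ∇ (f ^ 2) x = (2 * f x) • ∇ f x := by
  refine (toDual ℝ E).injective ?_
  simp [fderiv_pow 2 hf]

end Gradient

section Laplacian

open Filter InnerProductSpace Laplacian Gradient Topology

variable {E F : Type*} [NormedAddCommGroup E] [InnerProductSpace ℝ E] [FiniteDimensional ℝ E]
  [NormedAddCommGroup F] [NormedSpace ℝ F]

theorem laplacian_eq_sum_fderiv_fderiv {ι : Type*} [Fintype ι] (b : OrthonormalBasis ι ℝ E)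
    (f : E → F) (x : E) :
    Δ f x = ∑ i, fderiv ℝ (fderiv ℝ f) x (b i) (b i) := by
  simp [laplacian_eq_iteratedFDeriv_orthonormalBasis f b, iteratedFDeriv_two_apply]

theorem laplacian_nonpos_of_isLocalMax {f : E → ℝ} {x : E} (hf : ContDiffAt ℝ 2 f x)
    (hmax : IsLocalMax f x) : Δ f x ≤ 0 := by
  rw [laplacian_eq_sum_fderiv_fderiv (stdOrthonormalBasis ℝ E)]
  exact Finset.sum_nonpos fun i _ ↦ fderiv_fderiv_apply_nonpos_of_isLocalMax hf hmax _

theorem continuousAt_laplacian {f : E → F} {x : E} (hf : ContDiffAt ℝ 2 f x) :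
    ContinuousAt (Δ f) x := by
  have h : ContinuousAt (fderiv ℝ (fderiv ℝ f)) x :=
    ((hf.fderiv_right (m := 1) (by norm_num)).fderiv_right (m := 0) (by norm_num)).continuousAt
  rw [show Δ f = _ from funext (laplacian_eq_sum_fderiv_fderiv (stdOrthonormalBasis ℝ E) f)]
  exact tendsto_finsetSum _ fun i _ ↦ (h.clm_apply continuousAt_const).clm_apply continuousAt_const

theorem laplacian_sum {ι : Type*} {s : Finset ι} {f : ι → E → F} {x : E}
    (hf : ∀ i ∈ s, ContDiffAt ℝ 2 (f i) x) : Δ (∑ i ∈ s, f i) x = ∑ i ∈ s, Δ (f i) x := by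
  induction s using Finset.cons_induction with
  | empty => simp [show (0 : E → F) = fun _ ↦ 0 from rfl]
  | cons i s hi ih =>
    obtain ⟨hfi, hfs⟩ := Finset.forall_mem_cons hi _ |>.1 hf
    rw [Finset.sum_cons, Finset.sum_cons, ← ih hfs,
      hfi.laplacian_add (by simpa [Finset.sum_fn] using ContDiffAt.sum hfs)]

theorem laplacian_mul {f g : E → ℝ} {x : E} (hf : ContDiffAt ℝ 2 f x)
    (hg : ContDiffAt ℝ 2 g x) :
    Δ (f * g) x = f x * Δ g x + 2 * ⟪∇ f x, ∇ g x⟫ + g x * Δ f x := by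
  have hfg : fderiv ℝ (f * g) =ᶠ[𝓝 x] f • fderiv ℝ g + g • fderiv ℝ f := by
    filter_upwards [eventually_differentiableAt hf, eventually_differentiableAt hg] with y hfy hgy
      using fderiv_mul hfy hgy
  have hfx := hf.differentiableAt two_ne_zero
  have hgx := hg.differentiableAt two_ne_zero
  have h := (hfx.hasFDerivAt.smul (differentiableAt_fderiv hg).hasFDerivAt).add
    (hgx.hasFDerivAt.smul (differentiableAt_fderiv hf).hasFDerivAt)
  let b := stdOrthonormalBasis ℝ E
  simp only [laplacian_eq_sum_fderiv_fderiv b]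
  rw [hfg.fderiv_eq, h.fderiv, ← b.sum_inner_mul_inner, Finset.mul_sum, Finset.mul_sum,
    Finset.mul_sum, ← Finset.sum_add_distrib, ← Finset.sum_add_distrib]
  refine Finset.sum_congr rfl fun i _ ↦ ?_
  simp only [add_apply, smul_apply, ContinuousLinearMap.smulRight_apply, smul_eq_mul,
    inner_gradient_left, inner_gradient_right, Real.ringHom_apply]
  ring

theorem laplacian_sq_of_laplacian_eq_zero {f : E → ℝ} {x : E} (hf : ContDiffAt ℝ 2 f x)
    (h : Δ f x = 0) : Δ (f ^ 2) x = 2 * ‖∇ f x‖ ^ 2 := by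
  rw [sq, laplacian_mul hf hf, h, real_inner_self_eq_norm_sq]
  ring

theorem laplacian_norm_sq (x : E) :
    Δ (fun y : E ↦ ‖y‖ ^ 2) x = 2 * Module.finrank ℝ E := by
  have h : HasFDerivAt (fderiv ℝ fun y : E ↦ ‖y‖ ^ 2) (2 • innerSL ℝ : E →L[ℝ] E →L[ℝ] ℝ) x := by
    rw [fderiv_norm_sq]
    exact (2 • innerSL ℝ : E →L[ℝ] E →L[ℝ] ℝ).hasFDerivAt
  simp [laplacian_eq_sum_fderiv_fderiv (stdOrthonormalBasis ℝ E), h.fderiv, mul_comm,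
    show ∀ v : E, (innerSL ℝ : E →L[ℝ] E →L[ℝ] ℝ) v v = ‖v‖ ^ 2 from real_inner_self_eq_norm_sq]

theorem laplacian_inner_sq (e x : E) :
    Δ ((fun y ↦ ⟪e, y⟫) ^ 2) x = 2 * ‖e‖ ^ 2 := by
  have hgrad : HasGradientAt (fun y ↦ ⟪e, y⟫) e x := (innerSL ℝ e).hasFDerivAt
  have hfderiv : fderiv ℝ (fun y ↦ ⟪e, y⟫) = fun _ ↦ innerSL ℝ e :=
    funext fun _ ↦ (innerSL ℝ e).fderiv
  have hΔ : Δ (fun y ↦ ⟪e, y⟫) x = 0 := by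
    simp [laplacian_eq_sum_fderiv_fderiv (stdOrthonormalBasis ℝ E), hfderiv]
  have hC : ContDiffAt ℝ 2 (fun y ↦ ⟪e, y⟫) x := (innerSL ℝ e).contDiff.contDiffAt
  rw [laplacian_sq_of_laplacian_eq_zero hC hΔ, hgrad.gradient]

theorem laplacian_comp_add_right (f : E → F) (a x : E) :
    Δ (fun y ↦ f (y + a)) x = Δ f (x + a) := by
  simp only [laplacian_eq_sum_fderiv_fderiv (stdOrthonormalBasis ℝ E)]
  simp [show fderiv ℝ (fun y ↦ f (y + a)) = fun y ↦ fderiv ℝ f (y + a) from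
    funext fun _ ↦ fderiv_comp_add_right a, fderiv_comp_add_right]

theorem laplacian_norm_sub_sq (p x : E) :
    Δ (fun y ↦ ‖y - p‖ ^ 2) x = 2 * Module.finrank ℝ E := by
  simpa only [sub_eq_add_neg] using
    (laplacian_comp_add_right (fun y ↦ ‖y‖ ^ 2) (-p) x).trans (laplacian_norm_sq _)

theorem harmonicAt_comp_add_right {f : E → F} {a x : E} (hf : HarmonicAt f (x + a)) :
    HarmonicAt (fun y ↦ f (y + a)) x := by
  have htends : Tendsto (fun y ↦ y + a) (𝓝 x) (𝓝 (x + a)) :=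
    (continuous_id.add continuous_const).tendsto x
  refine ⟨hf.1.comp x (contDiffAt_id.add contDiffAt_const), ?_⟩
  filter_upwards [htends.eventually hf.2] with y hy
  rw [laplacian_comp_add_right, hy]
  rfl

theorem eventually_harmonicAt_differenceQuotient {f : E → F} {x : E} (hf : HarmonicAt f x) (v : E) :
    ∀ᶠ p in 𝓝 (0 : ℝ) ×ˢ 𝓝 x, HarmonicAt (differenceQuotient f v p.1) p.2 := by
  have htends : Tendsto (fun p : ℝ × E ↦ p.2 + p.1 • v) (𝓝 0 ×ˢ 𝓝 x) (𝓝 x) := by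
    rw [← nhds_prod_eq]
    exact Continuous.tendsto' (by fun_prop) _ _ (by simp)
  filter_upwards [htends.eventually hf.eventually, hf.eventually.prod_inr _] with p hp hp'
  exact ((harmonicAt_comp_add_right hp).sub hp').const_smul

end Laplacian

section Viscosity

open Filter InnerProductSpace Laplacian Topology Metric

theorem frequently_isLocalMax_of_tendsto {ι X : Type*} [PseudoMetricSpace X] [ProperSpace X]
    {l : Filter ι} [l.NeBot] {g : ι → X → ℝ} {f : X → ℝ} {x : X}
    (hg : ∀ᶠ p in l ×ˢ 𝓝 x, ContinuousAt (g p.1) p.2)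
    (hgf : ∀ᶠ y in 𝓝 x, Tendsto (fun p : ι × X ↦ g p.1 p.2) (l ×ˢ 𝓝 y) (𝓝 (f y)))
    (hmax : ∀ᶠ y in 𝓝[≠] x, f y < f x) :
    ∃ᶠ p in l ×ˢ 𝓝 x, IsLocalMax (g p.1) p.2 := by
  refine frequently_iff.2 fun {U} hU ↦ ?_
  obtain ⟨s, hs, t, ht, hst⟩ := mem_prod_iff.1 (inter_mem hU hg)
  obtain ⟨r, hr, hball⟩ := nhds_basis_closedBall.mem_iff.1
    (inter_mem ht (inter_mem hgf (eventually_nhdsWithin_iff.1 hmax)))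
  have hx : x ∈ closedBall x r := mem_closedBall_self hr.le
  have hlt : ∀ y ∈ sphere x r, ∀ᶠ p in l ×ˢ 𝓝 y, g p.1 p.2 < g p.1 x := fun y hy ↦ by
    obtain ⟨-, hgy, hy_lt⟩ := hball (sphere_subset_closedBall hy)
    have hgx : Tendsto (fun p : ι × X ↦ g p.1 x) (l ×ˢ 𝓝 y) (𝓝 (f x)) :=
      (hball hx).2.1.comp (tendsto_fst.prodMk tendsto_const_nhds)
    exact hgy.eventually_lt hgx (hy_lt (ne_of_mem_sphere hy hr.ne'))
  have hsphere : ∀ᶠ i in l, ∀ y ∈ sphere x r, g i y < g i x := by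
    have : ∀ᶠ p in l ×ˢ 𝓝ˢ (sphere x r), g p.1 p.2 < g p.1 x := by
      rw [(isCompact_sphere x r).prod_nhdsSet_eq_biSup]
      simpa using hlt
    exact this.curry.mono fun i hi ↦ hi.self_of_nhdsSet
  obtain ⟨i, hi, his⟩ := (hsphere.and hs).exists
  obtain ⟨z, hz, hzmax⟩ := (isCompact_closedBall x r).exists_isLocalMax_mem_open (f := g i)
    ball_subset_closedBall
    (fun y hy ↦ (hst (Set.mk_mem_prod his (hball hy).1)).2.continuousWithinAt) hx
    (fun y hy ↦ hi y (by simpa [closedBall_sdiff_ball] using hy)) isOpen_ball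
  exact ⟨(i, z), (hst (Set.mk_mem_prod his (hball (ball_subset_closedBall hz)).1)).1, hzmax⟩

variable {E : Type*} [NormedAddCommGroup E] [InnerProductSpace ℝ E] [FiniteDimensional ℝ E]

/-- `Φ` satisfies `0 ≤ Δ Φ` at `x` in the viscosity sense: every `C²` function touching `Φ` from
above at `x` has nonnegative Laplacian there. Only local comparison at `x` enters, so `Φ` need not
be differentiable. -/
def IsViscositySubharmonicAt (Φ : E → ℝ) (x : E) : Prop :=
  ∀ ψ : E → ℝ, ContDiffAt ℝ 2 ψ x → IsLocalMax (Φ - ψ) x → 0 ≤ Δ ψ x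

theorem isViscositySubharmonicAt_of_tendsto {ι : Type*} {l : Filter ι} [l.NeBot]
    {g : ι → E → ℝ} {Φ : E → ℝ} {x : E}
    (hg : ∀ᶠ p in l ×ˢ 𝓝 x, ContDiffAt ℝ 2 (g p.1) p.2)
    (hgΦ : ∀ᶠ y in 𝓝 x, Tendsto (fun p : ι × E ↦ g p.1 p.2) (l ×ˢ 𝓝 y) (𝓝 (Φ y)))
    (hΔ : ∀ η < 0, ∀ᶠ p in l ×ˢ 𝓝 x, η < Δ (g p.1) p.2) :
    IsViscositySubharmonicAt Φ x := by
  intro ψ hψ hmax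
  by_contra! hneg
  obtain ⟨η, hη, hηψ⟩ := exists_pos_mul_lt (neg_pos.2 hneg) (2 * Module.finrank ℝ E)
  let q : E → ℝ := fun y ↦ ‖y - x‖ ^ 2
  have hq : ContDiff ℝ 2 q := (contDiff_id.sub contDiff_const).norm_sq ℝ
  let χ : E → ℝ := ψ + η • q
  have hχ : ContDiffAt ℝ 2 χ x := hψ.add (hq.contDiffAt.const_smul η)
  have hχneg : Δ χ x < 0 := by
    rw [hψ.laplacian_add (f₂ := η • q) (hq.contDiffAt.const_smul η), laplacian_smul η hq.contDiffAt,
      laplacian_norm_sub_sq, smul_eq_mul]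
    linarith
  obtain ⟨μ, hχμ, hμ⟩ := exists_between hχneg
  have hχ_ev : ∀ᶠ y in 𝓝 x, ContDiffAt ℝ 2 χ y := hχ.eventually (by simp)
  have hstrict : ∀ᶠ y in 𝓝[≠] x, (Φ - χ) y < (Φ - χ) x := by
    filter_upwards [hmax.filter_mono nhdsWithin_le_nhds, self_mem_nhdsWithin] with y hy hyx
    have : 0 < η * ‖y - x‖ ^ 2 := mul_pos hη (pow_pos (norm_sub_pos_iff.2 hyx) 2)
    simp only [Pi.sub_apply] at hy
    simp only [χ, q, Pi.sub_apply, Pi.add_apply, Pi.smul_apply, smul_eq_mul, sub_self, norm_zero]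
    linarith
  have hfreq : ∃ᶠ p in l ×ˢ 𝓝 x, IsLocalMax (g p.1 - χ) p.2 := by
    refine frequently_isLocalMax_of_tendsto (g := fun i ↦ g i - χ) ?_ ?_ hstrict
    · filter_upwards [hg, hχ_ev.prod_inr l] with p hp hpχ
      exact hp.continuousAt.sub hpχ.continuousAt
    · filter_upwards [hgΦ, hχ_ev] with y hy hyχ
      exact hy.sub (hyχ.continuousAt.tendsto.comp tendsto_snd)
  obtain ⟨p, hpmax, hpg, hpχ, hpμ, hμp⟩ := (hfreq.and_eventually (hg.and ((hχ_ev.prod_inr l).and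
    ((((continuousAt_laplacian hχ).eventually_lt_const hχμ).prod_inr l).and (hΔ μ hμ))))).exists
  have hΔle := laplacian_nonpos_of_isLocalMax (f := g p.1 - χ) (hpg.sub hpχ) hpmax
  rw [hpg.laplacian_sub hpχ] at hΔle
  linarith

theorem not_isMaxOn_add_of_isViscositySubharmonicAt {Φ w : E → ℝ} {V : Set E} {x : E}
    (hV : V ∈ 𝓝 x) (hΦ : IsViscositySubharmonicAt Φ x) (hw : ContDiffAt ℝ 2 w x)
    (hΔw : 0 < Δ w x) : ¬ IsMaxOn (Φ + w) V x := by
  intro hmax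
  have h := hΦ (-w) hw.neg (by simpa [sub_neg_eq_add] using hmax.isLocalMax hV)
  rw [laplacian_neg, Pi.neg_apply] at h
  linarith

theorem le_of_forall_not_isMaxOn_add_smul {X : Type*} [TopologicalSpace X] {V S : Set X}
    (hV : IsCompact V) {Φ w : X → ℝ} {B : ℝ} (hΦ : ContinuousOn Φ V) (hw : ContinuousOn w V)
    (hmax : ∀ δ : ℝ, 0 < δ → ∀ x ∈ V \ S, ¬ IsMaxOn (Φ + δ • w) V x)
    (hB : ∀ x ∈ V ∩ S, Φ x ≤ B) {x : X} (hx : x ∈ V) : Φ x ≤ B := by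
  obtain ⟨C, hC⟩ := hV.exists_bound_of_continuousOn hw
  refine le_of_forall_pos_le_add fun η hη ↦ ?_
  obtain ⟨δ, hδ, hδη⟩ := exists_pos_mul_lt hη (2 * C)
  obtain ⟨z, hz, hzmax⟩ := hV.exists_isMaxOn ⟨x, hx⟩ (hΦ.add (hw.const_smul δ))
  have hzS : z ∈ S := by
    by_contra hzS
    exact hmax δ hδ z ⟨hz, hzS⟩ hzmax
  have hxz : Φ x + δ * w x ≤ Φ z + δ * w z := hzmax hx
  have hwx : δ * -C ≤ δ * w x := by gcongr; exact (abs_le.1 (hC x hx)).1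
  have hwz : δ * w z ≤ δ * C := by gcongr; exact (abs_le.1 (hC z hz)).2
  have hzB := hB z ⟨hz, hzS⟩
  linarith

end Viscosity

section Bernstein

open Filter InnerProductSpace Laplacian Gradient Topology

variable {E : Type*} [NormedAddCommGroup E] [InnerProductSpace ℝ E]

/-- The auxiliary function of Bernstein's method for bounding the gradient of `u` with weight
`F`. -/
noncomputable def bernsteinFunction [CompleteSpace E] (F : E → ℝ) (K : ℝ) (u : E → ℝ) (x : E) : ℝ :=
  F x * ‖∇ u x‖ ^ 2 + K * u x ^ 2

variable [FiniteDimensional ℝ E]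

theorem neg_two_mul_sq_le_laplacian_mul_sq {F v : E → ℝ} {K : ℝ} {x : E}
    (hF : ContDiffAt ℝ 2 F x) (hF₀ : 0 ≤ F x) (hΔF : 0 ≤ Δ F x)
    (hK : 0 ≤ K) (hFK : ‖∇ F x‖ ^ 2 ≤ K * F x) (hv : ContDiffAt ℝ 2 v x) (hΔv : Δ v x = 0) :
    -(2 * K * v x ^ 2) ≤ Δ (F * v ^ 2) x := by
  rw [laplacian_mul hF (g := v ^ 2) (hv.pow 2), laplacian_sq_of_laplacian_eq_zero hv hΔv,
    gradient_sq (hv.differentiableAt two_ne_zero), real_inner_smul_right, Pi.pow_apply]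
  have hcross : |2 * (v x * ⟪∇ F x, ∇ v x⟫)| ≤ F x * ‖∇ v x‖ ^ 2 + K * v x ^ 2 := by
    refine abs_le_of_sq_le_sq ?_ (by positivity)
    calc (2 * (v x * ⟪∇ F x, ∇ v x⟫)) ^ 2 = 4 * v x ^ 2 * ⟪∇ F x, ∇ v x⟫ ^ 2 := by ring
      _ ≤ 4 * v x ^ 2 * (‖∇ F x‖ ^ 2 * ‖∇ v x‖ ^ 2) := by
        rw [← mul_pow, ← sq_abs ⟪∇ F x, ∇ v x⟫]
        gcongr
        exact abs_real_inner_le_norm _ _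
      _ ≤ 4 * v x ^ 2 * (K * F x * ‖∇ v x‖ ^ 2) := by gcongr
      _ = 4 * (F x * ‖∇ v x‖ ^ 2) * (K * v x ^ 2) := by ring
      _ ≤ (F x * ‖∇ v x‖ ^ 2 + K * v x ^ 2) ^ 2 := four_mul_le_sq_add _ _
  have := neg_le_of_abs_le hcross
  have : 0 ≤ v x ^ 2 * Δ F x := by positivity
  linarith

theorem le_laplacian_sum_mul_sq_add {ι : Type*} {s : Finset ι} {F u : E → ℝ} {v : ι → E → ℝ}
    {K : ℝ} {x : E} (hF : ContDiffAt ℝ 2 F x) (hF₀ : 0 ≤ F x) (hΔF : 0 ≤ Δ F x) (hK : 0 ≤ K)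
    (hFK : ‖∇ F x‖ ^ 2 ≤ K * F x) (hv : ∀ i ∈ s, HarmonicAt (v i) x) (hu : HarmonicAt u x) :
    2 * K * (‖∇ u x‖ ^ 2 - ∑ i ∈ s, v i x ^ 2) ≤ Δ (∑ i ∈ s, F * v i ^ 2 + K • u ^ 2) x := by
  have hterm (i) (hi : i ∈ s) : ContDiffAt ℝ 2 (F * v i ^ 2) x := hF.mul ((hv i hi).1.pow 2)
  have hsum : ContDiffAt ℝ 2 (∑ i ∈ s, F * v i ^ 2) x := by
    simpa [Finset.sum_fn] using ContDiffAt.sum hterm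
  have hu₂ : ContDiffAt ℝ 2 (u ^ 2) x := hu.1.pow 2
  rw [hsum.laplacian_add (f₂ := K • u ^ 2) (hu₂.const_smul K), laplacian_sum hterm,
    laplacian_smul K hu₂, laplacian_sq_of_laplacian_eq_zero hu.1 hu.2.self_of_nhds, smul_eq_mul]
  have hle : ∑ i ∈ s, -(2 * K * v i x ^ 2) ≤ ∑ i ∈ s, Δ (F * v i ^ 2) x :=
    Finset.sum_le_sum fun i hi ↦ neg_two_mul_sq_le_laplacian_mul_sq hF hF₀ hΔF hK hFK
      (hv i hi).1 (hv i hi).2.self_of_nhds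
  rw [Finset.sum_neg_distrib, ← Finset.mul_sum] at hle
  linarith

theorem sum_sq_fderiv_eq_norm_gradient_sq {ι : Type*} [Fintype ι] (b : OrthonormalBasis ι ℝ E)
    (u : E → ℝ) (x : E) : ∑ i, fderiv ℝ u x (b i) ^ 2 = ‖∇ u x‖ ^ 2 := by
  simp [← b.sum_sq_inner_left (∇ u x), inner_gradient_left]

theorem tendsto_sum_sq_differenceQuotient {ι : Type*} [Fintype ι] (b : OrthonormalBasis ι ℝ E)
    {u : E → ℝ} {x : E} (hu : ContDiffAt ℝ 1 u x) :
    Tendsto (fun p : ℝ × E ↦ ∑ i, differenceQuotient u (b i) p.1 p.2 ^ 2) (𝓝[≠] 0 ×ˢ 𝓝 x)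
      (𝓝 (‖∇ u x‖ ^ 2)) := by
  rw [← sum_sq_fderiv_eq_norm_gradient_sq b]
  exact tendsto_finsetSum _ fun i _ ↦
    (tendsto_differenceQuotient (hu.hasStrictFDerivAt one_ne_zero) (b i)).pow 2

theorem isViscositySubharmonicAt_bernsteinFunction {F u : E → ℝ} {K : ℝ} {x : E}
    (hF : ContDiffAt ℝ 2 F x) (hF₀ : ∀ᶠ y in 𝓝 x, 0 ≤ F y) (hΔF : ∀ᶠ y in 𝓝 x, 0 ≤ Δ F y)
    (hK : 0 ≤ K) (hFK : ∀ᶠ y in 𝓝 x, ‖∇ F y‖ ^ 2 ≤ K * F y) (hu : HarmonicAt u x) :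
    IsViscositySubharmonicAt (bernsteinFunction F K u) x := by
  let b := stdOrthonormalBasis ℝ E
  let v (h : ℝ) (i) : E → ℝ := differenceQuotient u (b i) h
  have hl : 𝓝[≠] (0 : ℝ) ×ˢ 𝓝 x ≤ 𝓝 0 ×ˢ 𝓝 x := Filter.prod_mono nhdsWithin_le_nhds le_rfl
  have hF_ev : ∀ᶠ y in 𝓝 x, ContDiffAt ℝ 2 F y := hF.eventually (by simp)
  have hv : ∀ᶠ p in 𝓝[≠] 0 ×ˢ 𝓝 x, ∀ i, HarmonicAt (v p.1 i) p.2 :=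
    eventually_all.2 fun i ↦ hl (eventually_harmonicAt_differenceQuotient hu (b i))
  refine isViscositySubharmonicAt_of_tendsto (l := 𝓝[≠] 0)
    (g := fun h ↦ ∑ i, F * v h i ^ 2 + K • u ^ 2) ?_ ?_ fun η hη ↦ ?_
  · filter_upwards [hF_ev.prod_inr _, hv, hu.eventually.prod_inr _] with p hFp hvp hup
    refine ContDiffAt.add ?_ ((hup.1.pow 2).const_smul K)
    simpa [Finset.sum_fn] using ContDiffAt.sum fun i _ ↦ hFp.mul ((hvp i).1.pow 2)
  · filter_upwards [hF_ev, hu.eventually] with y hFy huy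
    have hsum := tendsto_sum_sq_differenceQuotient b (huy.1.of_le one_le_two)
    have hFlim : Tendsto (fun p : ℝ × E ↦ F p.2) (𝓝[≠] 0 ×ˢ 𝓝 y) (𝓝 (F y)) :=
      hFy.continuousAt.tendsto.comp tendsto_snd
    have hulim : Tendsto (fun p : ℝ × E ↦ u p.2) (𝓝[≠] 0 ×ˢ 𝓝 y) (𝓝 (u y)) :=
      huy.1.continuousAt.tendsto.comp tendsto_snd
    simpa [bernsteinFunction, v, Finset.mul_sum] using
      (hFlim.mul hsum).add ((hulim.pow 2).const_mul K)
  · have hsum := tendsto_sum_sq_differenceQuotient b (hu.1.of_le one_le_two)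
    have hgrad : Tendsto (fun p : ℝ × E ↦ ‖∇ u p.2‖ ^ 2) (𝓝[≠] 0 ×ˢ 𝓝 x) (𝓝 (‖∇ u x‖ ^ 2)) :=
      ((contDiffAt_gradient hu.1 one_add_one_eq_two.le).continuousAt.norm.pow 2).tendsto.comp
        tendsto_snd
    have hlim := (hgrad.sub hsum).const_mul (2 * K)
    rw [sub_self, mul_zero] at hlim
    filter_upwards [hlim.eventually (lt_mem_nhds hη), hv, hF_ev.prod_inr _, hF₀.prod_inr _,
      hΔF.prod_inr _, hFK.prod_inr _, hu.eventually.prod_inr _]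
      with p hηp hvp hFp hF₀p hΔFp hFKp hup
    exact hηp.trans_le (le_laplacian_sum_mul_sq_add hFp hF₀p hΔFp hK hFKp (fun i _ ↦ hvp i) hup)

end Bernstein

section Neumann

open InnerProductSpace Gradient Topology

variable {E : Type*} [NormedAddCommGroup E] [InnerProductSpace ℝ E] [CompleteSpace E]

theorem hasStrictFDerivAt_apply_eq_zero_of_eqOn_sphere {g : E → ℝ} {g' : E →L[ℝ] ℝ}
    {p x v : E} (hg : HasStrictFDerivAt g g' x) (hxp : x ≠ p)
    (hconst : ∀ᶠ y in 𝓝 x, ‖y - p‖ = ‖x - p‖ → g y = g x) (hv : ⟪x - p, v⟫ = 0) :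
    g' v = 0 := by
  have hextr : IsLocalExtrOn g {y | ‖y - p‖ ^ 2 = ‖x - p‖ ^ 2} x := by
    refine .inl (eventually_nhdsWithin_iff.2 (hconst.mono fun y hy hyp ↦ ?_))
    exact (hy ((sq_eq_sq₀ (norm_nonneg _) (norm_nonneg _)).1 hyp)).ge
  obtain ⟨a, b, hab, h⟩ := hextr.exists_multipliers_of_hasStrictFDerivAt_1d
    (hasStrictFDerivAt_norm_sub_sq p x) hg
  have heval (z : E) : a * (2 * ⟪x - p, z⟫) + b * g' z = 0 := by
    simpa [-map_sub] using DFunLike.congr_fun h z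
  rcases eq_or_ne b 0 with rfl | hb
  · have ha : a = 0 := by
      simpa [-map_sub, sub_eq_zero, hxp] using heval (x - p)
    simp [ha] at hab
  · simpa [hv, hb] using heval v

theorem inner_fderiv_gradient_of_neumann {u : E → ℝ} {p x : E} (hu : ContDiffAt ℝ 2 u x)
    (hxp : x ≠ p) (hneu : ∀ᶠ y in 𝓝 x, ‖y - p‖ = ‖x - p‖ → ⟪∇ u y, y - p⟫ = 0) :
    ⟪∇ u x, fderiv ℝ (∇ u) x (x - p)⟫ = -‖∇ u x‖ ^ 2 := by
  have hx : ⟪∇ u x, x - p⟫ = 0 := hneu.self_of_nhds rfl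
  have hgrad : HasStrictFDerivAt (∇ u) (fderiv ℝ (∇ u) x) x :=
    (contDiffAt_gradient hu one_add_one_eq_two.le).hasStrictFDerivAt one_ne_zero
  have h : ‖∇ u x‖ ^ 2 + ⟪fderiv ℝ (∇ u) x (∇ u x), x - p⟫ = 0 := by
    rw [← real_inner_self_eq_norm_sq]
    exact hasStrictFDerivAt_apply_eq_zero_of_eqOn_sphere
      (hgrad.inner ℝ ((hasStrictFDerivAt_id x).sub_const p)) hxp
      (hneu.mono fun y hy hyp ↦ (hy hyp).trans hx.symm) (by rwa [real_inner_comm])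
  rw [real_inner_comm, inner_fderiv_gradient hu, (hu.isSymmSndFDerivAt (by simp)).eq,
    ← inner_fderiv_gradient hu]
  linarith

theorem hasFDerivAt_bernsteinFunction {F u : E → ℝ} {x : E} (hF : DifferentiableAt ℝ F x)
    (K : ℝ) (hu : ContDiffAt ℝ 2 u x) :
    HasFDerivAt (bernsteinFunction F K u)
      (F x • 2 • innerSL ℝ (∇ u x) ∘L fderiv ℝ (∇ u) x + ‖∇ u x‖ ^ 2 • fderiv ℝ F x +
        K • (2 * u x) • fderiv ℝ u x) x := by
  have hgrad : HasFDerivAt (∇ u) (fderiv ℝ (∇ u) x) x :=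
    ((contDiffAt_gradient hu one_add_one_eq_two.le).differentiableAt one_ne_zero).hasFDerivAt
  refine ((hF.hasFDerivAt.mul hgrad.norm_sq).add
    (((hu.differentiableAt two_ne_zero).hasFDerivAt.pow 2).const_mul K)).congr_fderiv ?_
  simp

theorem fderiv_bernsteinFunction_of_neumann {F u : E → ℝ} {p x : E}
    (hF : DifferentiableAt ℝ F x) (K : ℝ) (hu : ContDiffAt ℝ 2 u x) (hxp : x ≠ p)
    (hneu : ∀ᶠ y in 𝓝 x, ‖y - p‖ = ‖x - p‖ → ⟪∇ u y, y - p⟫ = 0) :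
    fderiv ℝ (bernsteinFunction F K u) x (x - p) =
      (fderiv ℝ F x (x - p) - 2 * F x) * ‖∇ u x‖ ^ 2 := by
  have hux : fderiv ℝ u x (x - p) = 0 := by
    rw [← inner_gradient_left]
    exact hneu.self_of_nhds rfl
  rw [(hasFDerivAt_bernsteinFunction hF K hu).fderiv]
  simp only [add_apply, smul_apply, ContinuousLinearMap.comp_apply, coe_innerSL_apply,
    inner_fderiv_gradient_of_neumann hu hxp hneu, nsmul_eq_mul, Nat.cast_ofNat, smul_eq_mul, hux]
  ring

theorem not_isMaxOn_bernsteinFunction_add_of_neumann {F u w : E → ℝ} {p x : E} {V : Set E}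
    (hV : ∀ᶠ y in 𝓝 x, ‖x - p‖ ≤ ‖y - p‖ → y ∈ V) (hxp : x ≠ p)
    (hF : DifferentiableAt ℝ F x) (hF₂ : 2 * F x ≤ fderiv ℝ F x (x - p)) (K : ℝ)
    (hu : ContDiffAt ℝ 2 u x) (hneu : ∀ y ∈ V, ‖y - p‖ = ‖x - p‖ → ⟪∇ u y, y - p⟫ = 0)
    (hw : DifferentiableAt ℝ w x) (hw₀ : 0 < fderiv ℝ w x (x - p)) :
    ¬ IsMaxOn (bernsteinFunction F K u + w) V x := by
  have hΦ := (hasFDerivAt_bernsteinFunction hF K hu).differentiableAt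
  refine not_isMaxOn_of_fderiv_pos hV (hΦ.add hw) ?_
  rw [fderiv_add hΦ hw, add_apply, fderiv_bernsteinFunction_of_neumann hF K hu
    hxp (hV.mono fun y hy hyp ↦ hneu y (hy hyp.ge) hyp)]
  exact add_pos_of_nonneg_of_pos (mul_nonneg (sub_nonneg.2 hF₂) (sq_nonneg _)) hw₀

end Neumann

section NarrowRegion

open InnerProductSpace Laplacian Gradient Topology

variable {E : Type*} [NormedAddCommGroup E] [InnerProductSpace ℝ E] {e x : E} {c ε : ℝ}

/-- The quadratic `ε + |x'|² + (1 - a) xₙ²`, where `xₙ` is the coordinate along the unit vector `e`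
and `x'` is the component orthogonal to `e`. The values used are `a = 1`, the weight of the
estimate, `a = 2`, the weight in Bernstein's function, and `a = 3 / 2`, a barrier. -/
def gapQuadratic (e : E) (ε a : ℝ) (x : E) : ℝ := ε + ‖x‖ ^ 2 - a * ⟪e, x⟫ ^ 2

theorem gapQuadratic_neg (e : E) (ε a : ℝ) : gapQuadratic (-e) ε a = gapQuadratic e ε a := by
  ext x
  simp [gapQuadratic]

theorem contDiff_gapQuadratic (e : E) (ε a : ℝ) {n : WithTop ℕ∞} :
    ContDiff ℝ n (gapQuadratic e ε a) :=
  (contDiff_const.add (contDiff_norm_sq ℝ)).sub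
    (contDiff_const.mul ((innerSL ℝ e).contDiff.pow 2))

theorem hasFDerivAt_gapQuadratic (e : E) (ε a : ℝ) (x : E) :
    HasFDerivAt (gapQuadratic e ε a) (2 • innerSL ℝ x - a • (2 * ⟪e, x⟫) • innerSL ℝ e) x := by
  refine (((hasStrictFDerivAt_norm_sq x).hasFDerivAt.const_add ε).sub
    (((innerSL ℝ e).hasFDerivAt.pow 2).const_mul a)).congr_fderiv ?_
  simp

theorem gradient_gapQuadratic [CompleteSpace E] (e : E) (ε a : ℝ) (x : E) :
    ∇ (gapQuadratic e ε a) x = (2 : ℝ) • (x - (a * ⟪e, x⟫) • e) := by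
  refine ext_inner_right ℝ fun v ↦ ?_
  rw [inner_gradient_left, (hasFDerivAt_gapQuadratic e ε a x).fderiv]
  simp only [sub_apply, smul_apply, coe_innerSL_apply, nsmul_eq_mul, Nat.cast_ofNat, smul_eq_mul,
    inner_smul_left, Real.ringHom_apply, inner_sub_left]
  ring

theorem norm_gradient_gapQuadratic_two_sq [CompleteSpace E] (he : ‖e‖ = 1) (ε : ℝ) (x : E) :
    ‖∇ (gapQuadratic e ε 2) x‖ ^ 2 = 4 * ‖x‖ ^ 2 := by
  rw [gradient_gapQuadratic, norm_smul, mul_pow, norm_sub_sq_real, inner_smul_right,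
    real_inner_comm, norm_smul, he, Real.norm_two, Real.norm_eq_abs, mul_one, sq_abs]
  ring

theorem laplacian_gapQuadratic [FiniteDimensional ℝ E] (he : ‖e‖ = 1) (ε a : ℝ) (x : E) :
    Δ (gapQuadratic e ε a) x = 2 * (Module.finrank ℝ E - a) := by
  let l : E → ℝ := fun y ↦ ⟪e, y⟫
  let q : E → ℝ := fun y ↦ ‖y‖ ^ 2
  have hl : ContDiffAt ℝ 2 (l ^ 2) x := (innerSL ℝ e).contDiff.contDiffAt.pow 2
  have hq : ContDiffAt ℝ 2 q x := (contDiff_norm_sq ℝ).contDiffAt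
  have hε : ContDiffAt ℝ 2 (fun _ : E ↦ ε) x := contDiffAt_const
  have hεq : ContDiffAt ℝ 2 ((fun _ ↦ ε) + q) x := hε.add hq
  have hal : ContDiffAt ℝ 2 (a • l ^ 2) x := hl.const_smul a
  rw [show gapQuadratic e ε a = (fun _ ↦ ε) + q - a • l ^ 2 from rfl, hεq.laplacian_sub hal,
    hε.laplacian_add hq, laplacian_smul a hl, laplacian_inner_sq, laplacian_norm_sq, he]
  simp only [laplacian_const, Pi.zero_apply, zero_add, one_pow, mul_one, smul_eq_mul]
  ring

theorem norm_sub_smul_sq (he : ‖e‖ = 1) (s : ℝ) (x : E) :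
    ‖x - s • e‖ ^ 2 = ‖x‖ ^ 2 - 2 * s * ⟪e, x⟫ + s ^ 2 := by
  rw [norm_sub_sq_real, inner_smul_right, norm_smul, he, real_inner_comm, Real.norm_eq_abs, mul_one,
    sq_abs]
  ring

theorem fderiv_gapQuadratic_apply_of_norm_sub_eq_one (he : ‖e‖ = 1)
    (hcontact : ‖x - (1 + ε) • e‖ = 1) (a : ℝ) :
    fderiv ℝ (gapQuadratic e ε a) x (x - (1 + ε) • e) =
      2 * ‖x‖ ^ 2 - 2 * a * ⟪e, x⟫ ^ 2 + (a - 1) * (‖x‖ ^ 2 + 2 * ε + ε ^ 2) := by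
  have h := norm_sub_smul_sq he (1 + ε) x
  rw [hcontact] at h
  rw [(hasFDerivAt_gapQuadratic e ε a x).fderiv]
  simp only [sub_apply, smul_apply, innerSL_apply_apply, inner_sub_right, inner_smul_right,
    real_inner_self_eq_norm_sq, real_inner_comm e x, he, smul_eq_mul, nsmul_eq_mul]
  linear_combination (a - 1) * h

theorem two_mul_gapQuadratic_two_le_fderiv (he : ‖e‖ = 1) (hcontact : ‖x - (1 + ε) • e‖ = 1) :
    2 * gapQuadratic e ε 2 x ≤ fderiv ℝ (gapQuadratic e ε 2) x (x - (1 + ε) • e) := by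
  rw [fderiv_gapQuadratic_apply_of_norm_sub_eq_one he hcontact, gapQuadratic]
  linarith [sq_nonneg ‖x‖, sq_nonneg ε]

/-- The closed ball of radius `c` around the origin, less the two open unit balls centred at
`±(1 + ε) e`. -/
def narrowRegion (e : E) (c ε : ℝ) : Set E :=
  {x | ‖x‖ ≤ c ∧ 1 ≤ ‖x - (1 + ε) • e‖ ∧ 1 ≤ ‖x + (1 + ε) • e‖}

theorem narrowRegion_neg (e : E) (c ε : ℝ) : narrowRegion (-e) c ε = narrowRegion e c ε := by
  ext x
  simp [narrowRegion, and_comm, ← sub_eq_add_neg]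

theorem isCompact_narrowRegion [ProperSpace E] (e : E) (c ε : ℝ) :
    IsCompact (narrowRegion e c ε) := by
  refine (isCompact_closedBall (0 : E) c).of_isClosed_subset ?_ fun x hx ↦ by simpa using hx.1
  simp only [narrowRegion, Set.ofPred_and]
  refine .inter ?_ (.inter ?_ ?_) <;> exact isClosed_le (by fun_prop) (by fun_prop)

theorem narrowRegion_mem_nhds (hx : ‖x‖ < c) (hm : 1 < ‖x - (1 + ε) • e‖)
    (hp : 1 < ‖x + (1 + ε) • e‖) : narrowRegion e c ε ∈ 𝓝 x := by
  filter_upwards [(continuous_norm.tendsto x).eventually_lt_const hx,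
    ((continuous_id.sub continuous_const).norm.tendsto x).eventually_const_lt hm,
    ((continuous_id.add continuous_const).norm.tendsto x).eventually_const_lt hp]
    with y hy hym hyp using ⟨hy.le, hym.le, hyp.le⟩

theorem eventually_mem_narrowRegion (he : ‖e‖ = 1) (hε : 0 < ε) (hx : ‖x‖ < c)
    (hcontact : ‖x - (1 + ε) • e‖ = 1) :
    ∀ᶠ y in 𝓝 x, ‖x - (1 + ε) • e‖ ≤ ‖y - (1 + ε) • e‖ → y ∈ narrowRegion e c ε := by
  have hp : 1 < ‖x + (1 + ε) • e‖ := by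
    have h : ‖(2 * (1 + ε)) • e‖ = 2 * (1 + ε) := by
      rw [norm_smul, he, mul_one, Real.norm_of_nonneg (by positivity)]
    have := norm_sub_le (x + (1 + ε) • e) (x - (1 + ε) • e)
    rw [show x + (1 + ε) • e - (x - (1 + ε) • e) = (2 * (1 + ε)) • e by module] at this
    linarith
  filter_upwards [(continuous_norm.tendsto x).eventually_lt_const hx,
    ((continuous_id.add continuous_const).norm.tendsto x).eventually_const_lt hp]
    with y hy hyp hym using ⟨hy.le, hcontact.ge.trans hym, hyp.le⟩

theorem three_mul_inner_sq_le_of_mem_narrowRegion (he : ‖e‖ = 1) (hc : c ≤ 1 / 2) (hε : 0 < ε)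
    (hx : x ∈ narrowRegion e c ε) : 3 * ⟪e, x⟫ ^ 2 ≤ 2 * gapQuadratic e ε 1 x := by
  obtain ⟨hxc, hm, hp⟩ := hx
  have habs : |⟪e, x⟫| ≤ ‖x‖ := by simpa [he] using abs_real_inner_le_norm e x
  have hm₂ := one_le_pow₀ hm (n := 2)
  have hp₂ := one_le_pow₀ hp (n := 2)
  rw [norm_sub_smul_sq he] at hm₂
  rw [← sub_neg_eq_add, ← neg_smul, norm_sub_smul_sq he] at hp₂
  have hlin : 2 * (1 + ε) * |⟪e, x⟫| ≤ ‖x‖ ^ 2 + 2 * ε + ε ^ 2 := by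
    rcases abs_cases ⟪e, x⟫ with ⟨h, -⟩ | ⟨h, -⟩ <;> rw [h] <;> linarith
  have hsq : ⟪e, x⟫ ^ 2 ≤ |⟪e, x⟫| / 2 := by
    calc ⟪e, x⟫ ^ 2 = |⟪e, x⟫| * |⟪e, x⟫| := by rw [← sq, sq_abs]
      _ ≤ |⟪e, x⟫| * (1 / 2) := by gcongr; linarith
      _ = |⟪e, x⟫| / 2 := by ring
  have hperp : 0 ≤ ‖x‖ ^ 2 - ⟪e, x⟫ ^ 2 := sub_nonneg.2 (sq_le_sq.2 (by rwa [abs_norm]))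
  have hle : |⟪e, x⟫| ≤ 4 / 3 * (ε + (‖x‖ ^ 2 - ⟪e, x⟫ ^ 2)) := by
    refine le_of_mul_le_mul_left ?_ (by positivity : 0 < 3 / 2 + 2 * ε)
    calc (3 / 2 + 2 * ε) * |⟪e, x⟫| ≤ ‖x‖ ^ 2 - ⟪e, x⟫ ^ 2 + 2 * ε + ε ^ 2 := by linarith
      _ ≤ (3 / 2 + 2 * ε) * (4 / 3 * (ε + (‖x‖ ^ 2 - ⟪e, x⟫ ^ 2))) := by
        linarith [mul_nonneg hε.le hperp, sq_nonneg ε]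
  simp only [gapQuadratic]
  linarith

theorem gapQuadratic_one_le_three_mul_gapQuadratic_two (he : ‖e‖ = 1) (hc : c ≤ 1 / 2)
    (hε : 0 < ε) (hx : x ∈ narrowRegion e c ε) :
    gapQuadratic e ε 1 x ≤ 3 * gapQuadratic e ε 2 x := by
  have h := three_mul_inner_sq_le_of_mem_narrowRegion he hc hε hx
  simp only [gapQuadratic] at h ⊢
  linarith

theorem gapQuadratic_two_nonneg (he : ‖e‖ = 1) (hc : c ≤ 1 / 2) (hε : 0 < ε)
    (hx : x ∈ narrowRegion e c ε) : 0 ≤ gapQuadratic e ε 2 x := by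
  have h := three_mul_inner_sq_le_of_mem_narrowRegion he hc hε hx
  simp only [gapQuadratic] at h ⊢
  linarith [sq_nonneg ‖x‖]

theorem gapQuadratic_two_le (hc : c ≤ 1 / 2) (hx : ‖x‖ ≤ c) :
    gapQuadratic e ε 2 x ≤ 1 + ε := by
  have h : ‖x‖ ^ 2 ≤ 1 := pow_le_one₀ (norm_nonneg x) (by linarith)
  rw [gapQuadratic]
  linarith [sq_nonneg ⟪e, x⟫]

theorem norm_gradient_gapQuadratic_two_sq_le [CompleteSpace E] (he : ‖e‖ = 1)
    (hc : c ≤ 1 / 2) (hε : 0 < ε) (hx : x ∈ narrowRegion e c ε) :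
    ‖∇ (gapQuadratic e ε 2) x‖ ^ 2 ≤ 20 * gapQuadratic e ε 2 x := by
  have h := three_mul_inner_sq_le_of_mem_narrowRegion he hc hε hx
  rw [norm_gradient_gapQuadratic_two_sq he]
  simp only [gapQuadratic] at h ⊢
  linarith

theorem fderiv_gapQuadratic_three_halves_pos (he : ‖e‖ = 1) (hc : c ≤ 1 / 2) (hε : 0 < ε)
    (hx : x ∈ narrowRegion e c ε) (hcontact : ‖x - (1 + ε) • e‖ = 1) :
    0 < fderiv ℝ (gapQuadratic e ε (3 / 2)) x (x - (1 + ε) • e) := by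
  have h := three_mul_inner_sq_le_of_mem_narrowRegion he hc hε hx
  have habs : ⟪e, x⟫ ^ 2 ≤ ‖x‖ ^ 2 := by
    rw [sq_le_sq, abs_norm]
    simpa [he] using abs_real_inner_le_norm e x
  rw [fderiv_gapQuadratic_apply_of_norm_sub_eq_one he hcontact]
  simp only [gapQuadratic] at h
  linarith [sq_nonneg ‖x‖, pow_pos hε 2]

theorem not_isMaxOn_bernsteinFunction_add_of_contact [CompleteSpace E] {u : E → ℝ} {δ : ℝ}
    (he : ‖e‖ = 1) (hc : c ≤ 1 / 2) (hε : 0 < ε) (hδ : 0 < δ) (hx : x ∈ narrowRegion e c ε)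
    (hxc : ‖x‖ < c) (hcontact : ‖x - (1 + ε) • e‖ = 1) (hu : ContDiffAt ℝ 2 u x)
    (hneu : ∀ y ∈ narrowRegion e c ε, ‖y - (1 + ε) • e‖ = 1 → ⟪∇ u y, y - (1 + ε) • e⟫ = 0)
    (K : ℝ) :
    ¬ IsMaxOn (bernsteinFunction (gapQuadratic e ε 2) K u + δ • gapQuadratic e ε (3 / 2))
      (narrowRegion e c ε) x := by
  have hdiff (a : ℝ) := (hasFDerivAt_gapQuadratic e ε a x).differentiableAt
  refine not_isMaxOn_bernsteinFunction_add_of_neumann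
    (eventually_mem_narrowRegion he hε hxc hcontact) ?_ (hdiff 2)
    (two_mul_gapQuadratic_two_le_fderiv he hcontact) K hu (by simpa only [hcontact] using hneu)
    ((hdiff (3 / 2)).const_smul δ) ?_
  · rw [← sub_ne_zero, ← norm_ne_zero_iff, hcontact]
    exact one_ne_zero
  · rw [fderiv_const_smul (hdiff (3 / 2))]
    exact mul_pos hδ (fderiv_gapQuadratic_three_halves_pos he hc hε hx hcontact)

variable [FiniteDimensional ℝ E]

theorem not_isMaxOn_bernsteinFunction_add_of_interior {u : E → ℝ} {δ : ℝ}
    (hE : 2 ≤ Module.finrank ℝ E) (he : ‖e‖ = 1) (hc : c ≤ 1 / 2) (hε : 0 < ε) (hδ : 0 < δ)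
    (hx : narrowRegion e c ε ∈ 𝓝 x) (hu : HarmonicAt u x) :
    ¬ IsMaxOn (bernsteinFunction (gapQuadratic e ε 2) 20 u + δ • gapQuadratic e ε (3 / 2))
      (narrowRegion e c ε) x := by
  have hE' : (2 : ℝ) ≤ Module.finrank ℝ E := by exact_mod_cast hE
  have hC (a : ℝ) : ContDiffAt ℝ 2 (gapQuadratic e ε a) x :=
    (contDiff_gapQuadratic e ε a).contDiffAt
  refine not_isMaxOn_add_of_isViscositySubharmonicAt hx
    (isViscositySubharmonicAt_bernsteinFunction (hC 2) ?_ ?_ (by norm_num) ?_ hu)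
    ((hC (3 / 2)).const_smul δ) ?_
  · filter_upwards [hx] with y hy using gapQuadratic_two_nonneg he hc hε hy
  · refine .of_forall fun y ↦ ?_
    rw [laplacian_gapQuadratic he]
    linarith
  · filter_upwards [hx] with y hy using norm_gradient_gapQuadratic_two_sq_le he hc hε hy
  · rw [laplacian_smul δ (hC (3 / 2)), laplacian_gapQuadratic he]
    exact mul_pos hδ (by linarith)

theorem bernsteinFunction_le_of_narrowRegion {u : E → ℝ} {B : ℝ} (hE : 2 ≤ Module.finrank ℝ E)
    (he : ‖e‖ = 1) (hc : c ≤ 1 / 2) (hε : 0 < ε)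
    (hu : ∀ y ∈ narrowRegion e c ε, ContDiffAt ℝ 2 u y)
    (hΔ : ∀ y ∈ interior (narrowRegion e c ε), Δ u y = 0)
    (hneu₁ : ∀ y ∈ narrowRegion e c ε, ‖y - (1 + ε) • e‖ = 1 → ⟪∇ u y, y - (1 + ε) • e⟫ = 0)
    (hneu₂ : ∀ y ∈ narrowRegion e c ε, ‖y + (1 + ε) • e‖ = 1 → ⟪∇ u y, y + (1 + ε) • e⟫ = 0)
    (hB : ∀ y ∈ narrowRegion e c ε, ‖y‖ = c → bernsteinFunction (gapQuadratic e ε 2) 20 u y ≤ B)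
    (hx : x ∈ narrowRegion e c ε) : bernsteinFunction (gapQuadratic e ε 2) 20 u x ≤ B := by
  refine le_of_forall_not_isMaxOn_add_smul (S := {y | ‖y‖ = c}) (w := gapQuadratic e ε (3 / 2))
    (isCompact_narrowRegion e c ε) (fun y hy ↦ ?_)
    (contDiff_gapQuadratic (n := 0) e ε (3 / 2)).continuous.continuousOn
    (fun δ hδ y ⟨hy, hyc⟩ ↦ ?_) (fun y hy ↦ hB y hy.1 hy.2) hx
  · exact (hasFDerivAt_bernsteinFunction (hasFDerivAt_gapQuadratic e ε 2 y).differentiableAt 20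
      (hu y hy)).continuousAt.continuousWithinAt
  replace hyc : ‖y‖ < c := hy.1.lt_of_ne hyc
  rcases hy.2.1.eq_or_lt with hcontact | hm
  · exact not_isMaxOn_bernsteinFunction_add_of_contact he hc hε hδ hy hyc hcontact.symm
      (hu y hy) hneu₁ 20
  rcases hy.2.2.eq_or_lt with hcontact | hp
  · simp only [← gapQuadratic_neg e, ← narrowRegion_neg e] at hy hneu₂ ⊢
    refine not_isMaxOn_bernsteinFunction_add_of_contact (by rwa [norm_neg]) hc hε hδ hy
      hyc ?_ (hu y ?_) ?_ 20
    · simpa using hcontact.symm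
    · rwa [narrowRegion_neg] at hy
    · simpa using hneu₂
  have hV := narrowRegion_mem_nhds hyc hm hp
  refine not_isMaxOn_bernsteinFunction_add_of_interior hE he hc hε hδ hV ⟨hu y hy, ?_⟩
  filter_upwards [interior_mem_nhds.2 hV] with z hz using hΔ z hz

theorem bao_li_yin_gradient_estimate_general {u : E → ℝ} (hE : 2 ≤ Module.finrank ℝ E)
    (he : ‖e‖ = 1) (hc : c ≤ 1 / 2) (hε : 0 < ε)
    (hu : ∀ y ∈ narrowRegion e c ε, ContDiffAt ℝ 2 u y)
    (hΔ : ∀ y ∈ interior (narrowRegion e c ε), Δ u y = 0)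
    (hneu₁ : ∀ y ∈ narrowRegion e c ε, ‖y - (1 + ε) • e‖ = 1 → ⟪∇ u y, y - (1 + ε) • e⟫ = 0)
    (hneu₂ : ∀ y ∈ narrowRegion e c ε, ‖y + (1 + ε) • e‖ = 1 → ⟪∇ u y, y + (1 + ε) • e⟫ = 0)
    (hx : x ∈ narrowRegion e c ε) :
    (ε + (‖x‖ ^ 2 - ⟪e, x⟫ ^ 2)) * ‖∇ u x‖ ^ 2 ≤ 60 * (1 + ε) *
      sSup ((fun y ↦ ‖∇ u y‖ ^ 2 + u y ^ 2) '' {y ∈ narrowRegion e c ε | ‖y‖ = c}) := by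
  set S := sSup ((fun y ↦ ‖∇ u y‖ ^ 2 + u y ^ 2) '' {y ∈ narrowRegion e c ε | ‖y‖ = c})
  have hbdd : BddAbove ((fun y ↦ ‖∇ u y‖ ^ 2 + u y ^ 2) '' narrowRegion e c ε) := by
    refine (isCompact_narrowRegion e c ε).bddAbove_image fun y hy ↦
      ContinuousAt.continuousWithinAt ?_
    exact ((contDiffAt_gradient (hu y hy) one_add_one_eq_two.le).continuousAt.norm.pow 2).add
      ((hu y hy).continuousAt.pow 2)
  have hΦ : bernsteinFunction (gapQuadratic e ε 2) 20 u x ≤ 20 * (1 + ε) * S := by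
    refine bernsteinFunction_le_of_narrowRegion hE he hc hε hu hΔ hneu₁ hneu₂ (fun y hy hyc ↦ ?_) hx
    calc gapQuadratic e ε 2 y * ‖∇ u y‖ ^ 2 + 20 * u y ^ 2
        ≤ 20 * (1 + ε) * ‖∇ u y‖ ^ 2 + 20 * (1 + ε) * u y ^ 2 := by
          gcongr <;> linarith [gapQuadratic_two_le (e := e) (ε := ε) hc hy.1]
      _ ≤ 20 * (1 + ε) * S := by
          rw [← mul_add]
          gcongr
          exact le_csSup (hbdd.mono (Set.image_mono (Set.sep_subset _ _))) ⟨y, ⟨hy, hyc⟩, rfl⟩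
  calc (ε + (‖x‖ ^ 2 - ⟪e, x⟫ ^ 2)) * ‖∇ u x‖ ^ 2 = gapQuadratic e ε 1 x * ‖∇ u x‖ ^ 2 := by
        rw [gapQuadratic]; ring
    _ ≤ 3 * gapQuadratic e ε 2 x * ‖∇ u x‖ ^ 2 := by
        gcongr
        exact gapQuadratic_one_le_three_mul_gapQuadratic_two he hc hε hx
    _ ≤ 3 * bernsteinFunction (gapQuadratic e ε 2) 20 u x := by
        rw [bernsteinFunction]
        linarith [sq_nonneg (u x)]
    _ ≤ 60 * (1 + ε) * S := by linarith

end NarrowRegion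

section Coordinates

open InnerProductSpace Laplacian

theorem laplacian_eq_sum_fderiv_fderiv_single {ι : Type*} [Fintype ι] [DecidableEq ι]
    {u : EuclideanSpace ℝ ι → ℝ} {x : EuclideanSpace ℝ ι} (hu : ContDiffAt ℝ 2 u x) :
    Δ u x = ∑ i, fderiv ℝ (fun y ↦ fderiv ℝ u y (EuclideanSpace.single i 1)) x
      (EuclideanSpace.single i 1) := by
  simp [laplacian_eq_sum_fderiv_fderiv (EuclideanSpace.basisFun ι ℝ),
    fderiv_clm_apply (differentiableAt_fderiv hu) (differentiableAt_const _)]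

theorem sum_erase_sq_eq_norm_sq_sub_inner_sq {ι : Type*} [Fintype ι] [DecidableEq ι] (k : ι)
    (x : EuclideanSpace ℝ ι) :
    ∑ i ∈ Finset.univ.erase k, x i ^ 2 = ‖x‖ ^ 2 - ⟪EuclideanSpace.single k 1, x⟫ ^ 2 := by
  rw [EuclideanSpace.real_norm_sq_eq, EuclideanSpace.inner_single_left,
    ← Finset.add_sum_erase _ _ (Finset.mem_univ k)]
  simp

end Coordinates

/-- The maximum-principle form of the Bao–Li–Yin estimate (Theorem 4.1): for `n ≥ 2` there
are constants `c ∈ (0,1/2)`, `ε₀ ∈ (0,1)`, `C > 0`, depending only on `n`, such that for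
every `ε ∈ (0,ε₀)` and every `u` which is `C²` on an open set containing the narrow region
`V = {‖x‖ ≤ c} \ (int B⁺ ∪ int B⁻)`, harmonic in the interior of `V`, and satisfying the
homogeneous Neumann conditions on `∂B⁺ ∩ V` and `∂B⁻ ∩ V`, one has
`(ε + |x'|²) ‖∇u(x)‖² ≤ C · sup{‖∇u(y)‖² + u(y)² : y ∈ V, ‖y‖ = c}` for all `x ∈ V`. -/
theorem bao_li_yin_gradient_estimate (n : ℕ) (hn : 2 ≤ n) :
    ∃ c ε₀ C : ℝ, 0 < c ∧ c < 1 / 2 ∧ 0 < ε₀ ∧ ε₀ < 1 ∧ 0 < C ∧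
      ∀ ε : ℝ, 0 < ε → ε < ε₀ →
      ∀ u : EuclideanSpace ℝ (Fin n) → ℝ,
      ∀ V : Set (EuclideanSpace ℝ (Fin n)),
      V = {x | ‖x‖ ≤ c ∧
            1 ≤ ‖x - (1 + ε) • EuclideanSpace.single (⟨n - 1, by omega⟩ : Fin n) (1 : ℝ)‖ ∧
            1 ≤ ‖x + (1 + ε) • EuclideanSpace.single (⟨n - 1, by omega⟩ : Fin n) (1 : ℝ)‖} →
      (∃ U : Set (EuclideanSpace ℝ (Fin n)), IsOpen U ∧ V ⊆ U ∧ ContDiffOn ℝ 2 u U) →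
      (∀ x ∈ interior V,
        ∑ i : Fin n, fderiv ℝ (fun y => fderiv ℝ u y (EuclideanSpace.single i (1 : ℝ))) x
          (EuclideanSpace.single i (1 : ℝ)) = 0) →
      (∀ x ∈ V, ‖x - (1 + ε) • EuclideanSpace.single (⟨n - 1, by omega⟩ : Fin n) (1 : ℝ)‖ = 1 →
        ⟪gradient u x,
          x - (1 + ε) • EuclideanSpace.single (⟨n - 1, by omega⟩ : Fin n) (1 : ℝ)⟫ = 0) →
      (∀ x ∈ V, ‖x + (1 + ε) • EuclideanSpace.single (⟨n - 1, by omega⟩ : Fin n) (1 : ℝ)‖ = 1 →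
        ⟪gradient u x,
          x + (1 + ε) • EuclideanSpace.single (⟨n - 1, by omega⟩ : Fin n) (1 : ℝ)⟫ = 0) →
      ∀ x ∈ V,
        (ε + ∑ i ∈ Finset.univ.erase (⟨n - 1, by omega⟩ : Fin n), (x i) ^ 2) *
            ‖gradient u x‖ ^ 2 ≤
          C * sSup ((fun y => ‖gradient u y‖ ^ 2 + (u y) ^ 2) '' {y ∈ V | ‖y‖ = c}) := by
  refine ⟨1 / 4, 1 / 2, 90, by norm_num, by norm_num, by norm_num, by norm_num, by norm_num, ?_⟩
  intro ε hε hε₀ u V hV ⟨U, hU, hVU, hu⟩ hΔ hneu₁ hneu₂ x hx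
  have hu_at (y) (hy : y ∈ V) : ContDiffAt ℝ 2 u y := hu.contDiffAt (hU.mem_nhds (hVU hy))
  obtain rfl : V = narrowRegion (EuclideanSpace.single ⟨n - 1, by omega⟩ 1) (1 / 4) ε := hV
  rw [sum_erase_sq_eq_norm_sq_sub_inner_sq]
  refine (bao_li_yin_gradient_estimate_general (by simpa using hn) (by simp) (by norm_num) hε hu_at
    (fun y hy ↦ ?_) hneu₁ hneu₂ hx).trans ?_
  · rw [laplacian_eq_sum_fderiv_fderiv_single (hu_at y (interior_subset hy))]
    exact hΔ y hy
  · refine mul_le_mul_of_nonneg_right (by linarith) (Real.sSup_nonneg ?_)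
    rintro _ ⟨y, -, rfl⟩
    positivity
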